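/- Error bound for uniform-sampling based least-squares regression: Let X ∈ ℝ^{n×d} (n ≥ d ≥ 2, rank(X) = d) with coherence μ, let y ∈ ℝ^n, and let β_lsr = (XᵀX)⁻¹Xᵀy. Suppose 1000·μ·d·(ln d + 7) ≤ c ≤ n, and let C be a uniformly distributed random c-element subset of {1, …, n}. Then with probability at least 0.05, every minimizer β̃ of the sampled objective β ↦ Σ_{i∈C} (y_i − x^(i)β)² satisfies both ‖y − Xβ̃‖₂² ≤ 2.2·‖y − Xβ_lsr‖₂² and ‖β_lsr − β̃‖₂² ≤ (1.2/σ_min²(X))·‖y − Xβ_lsr‖₂². Moreover, if γ ∈ (0, 1] satisfies ‖UUᵀy‖₂ ≥ γ‖y‖₂, then also ‖β_lsr − β̃‖₂² ≤ 1.2·κ²(X)·(γ⁻² − 1)·‖β_lsr‖₂². -/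

import Mathlib

open Matrix BigOperators
open scoped Classical

/-- Euclidean norm of a real vector. -/
noncomputable def vnorm {m : ℕ} (v : Fin m → ℝ) : ℝ := Real.sqrt (∑ i, v i ^ 2)

/-- Smallest singular value of a real matrix: `min_{‖v‖=1} ‖Xv‖`. -/
noncomputable def sigmaMin {n d : ℕ} (X : Matrix (Fin n) (Fin d) ℝ) : ℝ :=
  sInf {r : ℝ | ∃ v : Fin d → ℝ, vnorm v = 1 ∧ r = vnorm (X.mulVec v)}

/-- Largest singular value of a real matrix: `max_{‖v‖=1} ‖Xv‖`. -/
noncomputable def sigmaMax {n d : ℕ} (X : Matrix (Fin n) (Fin d) ℝ) : ℝ :=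
  sSup {r : ℝ | ∃ v : Fin d → ℝ, vnorm v = 1 ∧ r = vnorm (X.mulVec v)}

/-!
Let `u i` be the rows of `U`, so that `∑ u i (u i)ᵀ = 1`, and let `r` be the residual of the full
problem, so that `∑ r i • u i = 0`. If `β̃` does at least as well as `β_lsr` on the sample `C`, then
`z = Uᵀ X (β̃ - β_lsr)` satisfies `∑_C ⟨u i, z⟩² ≤ 2 ⟨∑_C r i • u i, z⟩`, so a lower bound on
`∑_C u i (u i)ᵀ` together with an upper bound on `‖∑_C r i • u i‖` bounds `‖z‖`, the norm of the
change of prediction.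

The upper bound is a second-moment computation. For the lower bound, add `a • 1` to every summand
and follow `𝔼 tr B⁻ᵖ`, where `B` is the regularised sum over a random `k`-subset, as `k` decreases
from `n` to `c`. Erasing a random element increases it by a factor of about `1 + p / k`, by the
Araki–Lieb–Thirring inequality, so it stays comparable to `(n / c)ᵖ · d`. With `p` of order `log d`,
Markov's inequality bounds the probability that `B` has a small eigenvalue.
-/

section TraceInequalities

open scoped MatrixOrder ComplexOrder

theorem trace_mul_pow_comm {R m : Type*} [CommSemiring R] [Fintype m] [DecidableEq m]
    (A B : Matrix m m R) (k : ℕ) : ((A * B) ^ k).trace = ((B * A) ^ k).trace := by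
  cases k with
  | zero => simp only [pow_zero]
  | succ k =>
    rw [pow_succ, ← mul_assoc, mul_pow_mul, mul_assoc, trace_mul_comm, mul_assoc, ← pow_succ]

variable {𝕜 l m : Type*} [RCLike 𝕜] [Fintype l] [Fintype m]

theorem re_trace_nonneg_of_nonneg {A : Matrix m m 𝕜} (hA : 0 ≤ A) : 0 ≤ RCLike.re A.trace :=
  (RCLike.nonneg_iff.1 hA.posSemidef.trace_nonneg).1

theorem two_mul_re_trace_conjTranspose_mul_le (A B : Matrix l m 𝕜) :
    2 * RCLike.re (Aᴴ * B).trace ≤ RCLike.re (Aᴴ * A).trace + RCLike.re (Bᴴ * B).trace := by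
  have hnonneg : 0 ≤ RCLike.re ((A - B)ᴴ * (A - B)).trace :=
    re_trace_nonneg_of_nonneg (posSemidef_conjTranspose_mul_self (A - B)).nonneg
  have hsymm : RCLike.re (Bᴴ * A).trace = RCLike.re (Aᴴ * B).trace := by
    rw [← RCLike.conj_re, starRingEnd_apply, ← trace_conjTranspose, conjTranspose_mul,
      conjTranspose_conjTranspose]
  rw [conjTranspose_sub, Matrix.sub_mul, Matrix.mul_sub, Matrix.mul_sub] at hnonneg
  simp only [trace_sub, map_sub] at hnonneg
  linarith

theorem re_trace_mul_nonneg {A B : Matrix m m 𝕜} (hA : 0 ≤ A) (hB : 0 ≤ B) :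
    0 ≤ RCLike.re (A * B).trace := by
  have hsqrt : IsSelfAdjoint (CFC.sqrt A) := (CFC.sqrt_nonneg A).isSelfAdjoint
  rw [← CFC.sqrt_mul_sqrt_self A hA, mul_assoc, trace_mul_comm]
  exact re_trace_nonneg_of_nonneg (hsqrt.conjugate_nonneg hB)

variable [DecidableEq m]

theorem le_re_trace_of_mem_spectrum {A : Matrix m m 𝕜} (hA : 0 ≤ A) {x : ℝ}
    (hx : x ∈ spectrum ℝ A) : x ≤ RCLike.re A.trace := by
  have hpsd := hA.posSemidef
  obtain ⟨i, rfl⟩ := hpsd.isHermitian.spectrum_real_eq_range_eigenvalues ▸ hx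
  rw [hpsd.isHermitian.trace_eq_sum_eigenvalues, ← RCLike.ofReal_sum, RCLike.ofReal_re]
  exact Finset.single_le_sum (fun j _ ↦ hpsd.eigenvalues_nonneg j) (Finset.mem_univ i)

-- Each half of the statement at `k + 1` uses both halves at `k`.
theorem re_trace_pow_two_pow_le_and_re_trace_mul_pow_two_pow_le (k : ℕ) :
    (∀ X : Matrix m m 𝕜,
      RCLike.re (X ^ 2 ^ (k + 1)).trace ≤ RCLike.re ((X * Xᴴ) ^ 2 ^ k).trace) ∧
    ∀ A B : Matrix m m 𝕜, A.IsHermitian → B.IsHermitian →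
      RCLike.re ((A * B) ^ 2 ^ k).trace ≤ RCLike.re (A ^ 2 ^ k * B ^ 2 ^ k).trace := by
  induction k with
  | zero =>
    refine ⟨fun X ↦ ?_, fun A B _ _ ↦ by simp only [pow_zero, pow_one, le_refl]⟩
    have h := two_mul_re_trace_conjTranspose_mul_le Xᴴ X
    rw [conjTranspose_conjTranspose, trace_mul_comm Xᴴ X] at h
    rw [zero_add, pow_one, pow_zero, pow_one, pow_two]
    linarith
  | succ k ih =>
    obtain ⟨ih_sq, ih_mul⟩ := ih
    refine ⟨fun X ↦ ?_, fun A B hA hB ↦ ?_⟩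
    · have hleft : (X * Xᴴ).IsHermitian := isHermitian_mul_conjTranspose_self X
      have hright : (Xᴴ * X).IsHermitian := isHermitian_conjTranspose_mul_self X
      have hsq : RCLike.re (X ^ 2 ^ (k + 2)).trace
          ≤ RCLike.re (((X * Xᴴ) * (Xᴴ * X)) ^ 2 ^ k).trace := by
        convert ih_sq (X ^ 2) using 2
        · rw [← pow_mul, ← pow_succ']
        · rw [pow_two, conjTranspose_mul, mul_assoc X X, trace_mul_pow_comm X]
          simp only [mul_assoc]
      have hyoung := two_mul_re_trace_conjTranspose_mul_le ((X * Xᴴ) ^ 2 ^ k) ((Xᴴ * X) ^ 2 ^ k)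
      rw [(hleft.pow _).eq, (hright.pow _).eq, ← pow_add, ← pow_add, ← two_mul, ← pow_succ',
        trace_mul_pow_comm Xᴴ X] at hyoung
      linarith [ih_mul _ _ hleft hright]
    · calc RCLike.re ((A * B) ^ 2 ^ (k + 1)).trace
          ≤ RCLike.re ((A * B * (A * B)ᴴ) ^ 2 ^ k).trace := ih_sq (A * B)
        _ = RCLike.re ((A ^ 2 * B ^ 2) ^ 2 ^ k).trace := by
          rw [conjTranspose_mul, hA.eq, hB.eq, ← mul_assoc, trace_mul_pow_comm]
          simp only [mul_assoc, pow_two]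
        _ ≤ RCLike.re (A ^ 2 ^ (k + 1) * B ^ 2 ^ (k + 1)).trace := by
          rw [pow_succ' 2, pow_mul, pow_mul]
          exact ih_mul _ _ (hA.pow 2) (hB.pow 2)

/-- The Araki–Lieb–Thirring inequality for exponents that are powers of two. -/
theorem re_trace_mul_pow_two_pow_le {A B : Matrix m m 𝕜} (hA : A.IsHermitian)
    (hB : B.IsHermitian) (k : ℕ) :
    RCLike.re ((A * B) ^ 2 ^ k).trace ≤ RCLike.re (A ^ 2 ^ k * B ^ 2 ^ k).trace :=
  (re_trace_pow_two_pow_le_and_re_trace_mul_pow_two_pow_le k).2 A B hA hB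

end TraceInequalities

section Potential

open scoped MatrixOrder ComplexOrder

variable {𝕜 m : Type*} [RCLike 𝕜] [DecidableEq m]

theorem posDef_of_smul_one_le {B : Matrix m m 𝕜} {ρ : ℝ} (hρ : 0 < ρ) (h : ρ • 1 ≤ B) :
    B.PosDef := by
  rw [← add_sub_cancel (ρ • 1) B]
  exact (PosDef.one.smul hρ).add_posSemidef (le_iff.1 h)

theorem posDef_one_sub_of_le_smul_one {V : Matrix m m 𝕜} {η : ℝ} (hη : η < 1) (hV : V ≤ η • 1) :
    (1 - V).PosDef := by
  refine posDef_of_smul_one_le (sub_pos.2 hη) ?_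
  rw [sub_smul, one_smul]
  exact sub_le_sub_left hV 1

variable [Fintype m]

/-- The potential `tr B⁻ᵖ` of a positive definite matrix `B`. Its `p`-th root is within a factor
`d^(1/p)` of the inverse of the smallest eigenvalue of a `d × d` matrix. The trace is real for
Hermitian `B`; taking the real part makes the potential real-valued without a proof of that. -/
noncomputable def traceInvPow (p : ℕ) (B : Matrix m m 𝕜) : ℝ := RCLike.re (B⁻¹ ^ p).trace

theorem traceInvPow_smul_one (p : ℕ) (b : ℝ) :
    traceInvPow p (b • (1 : Matrix m m 𝕜)) = Fintype.card m * b⁻¹ ^ p := by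
  have hinv : (b • (1 : Matrix m m 𝕜))⁻¹ = b⁻¹ • 1 := by
    rcases eq_or_ne b 0 with rfl | hb
    · simp only [zero_smul, _root_.inv_zero, nonsing_inv_eq_ringInverse, Ring.inverse_zero]
    · exact inv_eq_left_inv (by rw [smul_mul_smul_comm, inv_mul_cancel₀ hb, one_smul, one_mul])
  rw [traceInvPow, hinv, smul_pow, one_pow, trace_smul, trace_one, RCLike.smul_re,
    RCLike.natCast_re, mul_comm]

theorem traceInvPow_nonneg (p : ℕ) {B : Matrix m m 𝕜} (hB : B.PosSemidef) :
    0 ≤ traceInvPow p B :=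
  re_trace_nonneg_of_nonneg (hB.inv.pow p).nonneg

theorem smul_one_le_of_traceInvPow_lt {p : ℕ} {B : Matrix m m 𝕜} {ρ : ℝ} (hB : B.PosDef)
    (hρ : 0 < ρ) (h : traceInvPow p B < ρ⁻¹ ^ p) : ρ • 1 ≤ B := by
  rw [← Algebra.algebraMap_eq_smul_one,
    algebraMap_le_iff_le_spectrum (ha := hB.isHermitian.isSelfAdjoint)]
  intro x hx
  have hx_pos : 0 < x := hB.isStrictlyPositive.spectrum_pos hx
  have hx_inv : x⁻¹ ^ p ∈ spectrum ℝ (B⁻¹ ^ p) := by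
    lift B to (Matrix m m 𝕜)ˣ using hB.isUnit
    rw [← coe_units_inv]
    exact spectrum.pow_mem_pow _ p (spectrum.inv₀_mem_inv hx)
  have hle : x⁻¹ ^ p ≤ traceInvPow p B :=
    le_re_trace_of_mem_spectrum (hB.posSemidef.inv.pow p).nonneg hx_inv
  exact (inv_le_inv₀ hx_pos hρ).1
    (lt_of_pow_lt_pow_left₀ p (inv_nonneg.2 hρ.le) (hle.trans_lt h)).le

theorem inv_one_sub_pow_le {x η : ℝ} {p : ℕ} (hp : 1 ≤ p) (hx : 0 ≤ x) (hxη : x ≤ η)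
    (hη : p * η < 1) : (1 - x)⁻¹ ^ p ≤ 1 + p / (1 - p * η) * x := by
  have hp' : (1 : ℝ) ≤ p := by exact_mod_cast hp
  have hpx : p * x ≤ p * η := by gcongr
  have bernoulli : 1 - p * x ≤ (1 - x) ^ p := by
    have := one_add_mul_le_pow (a := -x) (by nlinarith) p
    rw [← sub_eq_add_neg] at this
    linarith
  have hpx_pos : 0 < 1 - p * x := by linarith
  have : 0 < 1 - p * η := by linarith
  rw [inv_pow]
  calc ((1 - x) ^ p)⁻¹ ≤ (1 - p * x)⁻¹ := by gcongr
    _ = 1 + p / (1 - p * x) * x := by field_simp; ring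
    _ ≤ 1 + p / (1 - p * η) * x := by gcongr

theorem lt_one_of_natCast_mul_lt_one {η : ℝ} {p : ℕ} (hp : 1 ≤ p) (hη : p * η < 1) : η < 1 := by
  have hp' : (1 : ℝ) ≤ p := by exact_mod_cast hp
  nlinarith

theorem one_sub_inv_pow_le {V : Matrix m m 𝕜} {η : ℝ} {p : ℕ} (hp : 1 ≤ p) (hV : 0 ≤ V)
    (hVη : V ≤ η • 1) (hη : p * η < 1) :
    (1 - V)⁻¹ ^ p ≤ 1 + (p / (1 - p * η) : ℝ) • V := by
  have hη_lt : η < 1 := lt_one_of_natCast_mul_lt_one hp hη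
  have hspec_nonneg : ∀ x ∈ spectrum ℝ V, 0 ≤ x := fun x hx ↦ spectrum_nonneg_of_nonneg hV hx
  have hspec_le : ∀ x ∈ spectrum ℝ V, x ≤ η := by
    rwa [← Algebra.algebraMap_eq_smul_one, le_algebraMap_iff_spectrum_le] at hVη
  have hcont (f : ℝ → ℝ) : ContinuousOn f (spectrum ℝ V) := V.finite_real_spectrum.continuousOn f
  have hleft : (1 - V)⁻¹ ^ p = cfc (fun x : ℝ ↦ (1 - x)⁻¹ ^ p) V := by
    rw [cfc_pow _ p V (hcont _), cfc_inv _ V _ (hcont _), cfc_sub _ _ V (hcont _) (hcont _),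
      cfc_const_one ℝ V, cfc_id' ℝ V, nonsing_inv_eq_ringInverse]
    exact fun x hx ↦ sub_ne_zero.2 ((hspec_le x hx).trans_lt hη_lt).ne'
  have hright : 1 + (p / (1 - p * η) : ℝ) • V = cfc (fun x : ℝ ↦ 1 + p / (1 - p * η) * x) V := by
    rw [cfc_const_add 1 _ V (hcont _), cfc_const_mul _ _ V (hcont _), cfc_id' ℝ V, map_one]
  rw [hleft, hright]
  exact cfc_mono (fun x hx ↦ inv_one_sub_pow_le hp (hspec_nonneg x hx) (hspec_le x hx) hη)
    (hcont _) (hcont _)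

theorem exists_isSelfAdjoint_mul_self_eq_inv {B : Matrix m m 𝕜} (hB : B.PosDef) :
    ∃ R : Matrix m m 𝕜, IsSelfAdjoint R ∧ R * R = B⁻¹ ∧ R * B * R = 1 := by
  have hRR : CFC.sqrt B⁻¹ * CFC.sqrt B⁻¹ = B⁻¹ :=
    CFC.sqrt_mul_sqrt_self _ hB.inv.posSemidef.nonneg
  refine ⟨CFC.sqrt B⁻¹, (CFC.sqrt_nonneg _).isSelfAdjoint, hRR, ?_⟩
  rw [mul_assoc, mul_eq_one_comm, mul_assoc, hRR]
  exact mul_nonsing_inv _ ((isUnit_iff_isUnit_det _).1 hB.isUnit)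

-- With `R = B^(-1/2)` and `V = R W R`, the inverse of `B - W` is `R (1 - V)⁻¹ R`, whose `p`-th
-- power has trace at most `tr ((1 - V)⁻ᵖ B⁻ᵖ)` by Araki–Lieb–Thirring.
theorem traceInvPow_sub_le {B W : Matrix m m 𝕜} {η : ℝ} (k : ℕ) (hB : B.PosDef) (hW : 0 ≤ W)
    (hWB : W ≤ η • B) (hη : (2 ^ k : ℕ) * η < 1) :
    traceInvPow (2 ^ k) (B - W) ≤ traceInvPow (2 ^ k) B
      + (2 ^ k : ℕ) / (1 - (2 ^ k : ℕ) * η) * RCLike.re (W * B⁻¹ ^ (2 ^ k + 1)).trace := by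
  set p := 2 ^ k
  obtain ⟨R, hR, hRR, hRBR⟩ := exists_isSelfAdjoint_mul_self_eq_inv hB
  set V := R * W * R with hV_def
  have hV : 0 ≤ V := hR.conjugate_nonneg hW
  have hVη : V ≤ η • 1 := by
    simpa only [mul_smul_comm, smul_mul_assoc, hRBR] using hR.conjugate_le_conjugate hWB
  have hRBWR : R * (B - W) * R = 1 - V := by rw [mul_sub, sub_mul, hRBR]
  have h_one_sub_V : (1 - V).PosDef :=
    posDef_one_sub_of_le_smul_one (lt_one_of_natCast_mul_lt_one Nat.one_le_two_pow hη) hVη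
  have hinv : (B - W)⁻¹ = R * ((1 - V)⁻¹ * R) := by
    refine inv_eq_left_inv ?_
    rw [mul_assoc, mul_eq_one_comm, mul_assoc, mul_assoc, ← mul_assoc R (B - W), hRBWR]
    exact nonsing_inv_mul _ ((isUnit_iff_isUnit_det _).1 h_one_sub_V.isUnit)
  have hcomm : Commute R (B⁻¹ ^ p) := by
    rw [← hRR]
    exact ((Commute.refl R).mul_right (Commute.refl R)).pow_right p
  have hV_trace : (V * B⁻¹ ^ p).trace = (W * B⁻¹ ^ (p + 1)).trace := by
    rw [hV_def, mul_assoc, mul_assoc, trace_mul_comm, hcomm.eq, mul_assoc, mul_assoc, hRR,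
      ← pow_succ]
  have hle := re_trace_mul_nonneg
    (sub_nonneg.2 (one_sub_inv_pow_le Nat.one_le_two_pow hV hVη hη))
    (hB.inv.posSemidef.pow p).nonneg
  calc traceInvPow p (B - W) = RCLike.re (((1 - V)⁻¹ * B⁻¹) ^ p).trace := by
        rw [traceInvPow, hinv, trace_mul_pow_comm, mul_assoc, hRR]
    _ ≤ RCLike.re ((1 - V)⁻¹ ^ p * B⁻¹ ^ p).trace :=
        re_trace_mul_pow_two_pow_le h_one_sub_V.inv.isHermitian hB.inv.isHermitian k
    _ ≤ traceInvPow p B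
          + p / (1 - p * η) * RCLike.re (W * B⁻¹ ^ (p + 1)).trace := by
        rw [sub_mul, add_mul, one_mul, trace_sub, trace_add, smul_mul_assoc, trace_smul, hV_trace,
          map_sub, map_add, RCLike.smul_re] at hle
        rw [traceInvPow]
        linarith

end Potential

section RandomSubsets

open scoped Finset

variable {ι : Type*}

theorem sum_powersetCard_succ_sum_erase [DecidableEq ι] {M : Type*} [AddCommMonoid M]
    (t : Finset ι) (k : ℕ) (f : Finset ι → M) :
    ∑ s ∈ t.powersetCard (k + 1), ∑ i ∈ s, f (s.erase i)
      = (#t - k) • ∑ s ∈ t.powersetCard k, f s := by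
  have hcount : ∑ s ∈ t.powersetCard (k + 1), ∑ i ∈ s, f (s.erase i)
      = ∑ s ∈ t.powersetCard k, ∑ _i ∈ t \ s, f s := by
    rw [Finset.sum_sigma', Finset.sum_sigma']
    refine Finset.sum_bij' (fun x _ ↦ ⟨x.1.erase x.2, x.2⟩) (fun x _ ↦ ⟨insert x.2 x.1, x.2⟩)
      ?_ ?_ ?_ ?_ (fun _ _ ↦ rfl) <;> rintro ⟨s, i⟩ h <;>
      simp only [Finset.mem_sigma, Finset.mem_powersetCard, Finset.mem_sdiff] at h
    · have : #(s.erase i) = k := by rw [Finset.card_erase_of_mem h.2, h.1.2, Nat.add_sub_cancel]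
      simp [Finset.mem_powersetCard, (Finset.erase_subset i s).trans h.1.1, this, h.1.1 h.2]
    · simp [Finset.mem_powersetCard, Finset.insert_subset h.2.1 h.1.1,
        Finset.card_insert_of_notMem h.2.2, h.1.2]
    · simp only [Finset.insert_erase h.2]
    · simp only [Finset.erase_insert h.2.2]
  rw [hcount, Finset.smul_sum]
  refine Finset.sum_congr rfl fun s hs ↦ ?_
  obtain ⟨hst, rfl⟩ := Finset.mem_powersetCard.1 hs
  rw [Finset.sum_const, Finset.card_sdiff_of_subset hst]

-- Erasing a uniformly random element of a random `(k + 1)`-subset yields a random `k`-subset.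
theorem succ_mul_expect_powersetCard [DecidableEq ι] {t : Finset ι} {k : ℕ} (hk : k < #t)
    (f : Finset ι → ℝ) :
    (k + 1) * 𝔼 s ∈ t.powersetCard k, f s
      = 𝔼 s ∈ t.powersetCard (k + 1), ∑ i ∈ s, f (s.erase i) := by
  have hchoose : ((#t).choose (k + 1) : ℝ) * (k + 1) = (#t).choose k * (#t - k : ℕ) := by
    exact_mod_cast Nat.choose_succ_right_eq #t k
  have hpos : (0 : ℝ) < (#t).choose k := by exact_mod_cast Nat.choose_pos hk.le
  have hpos_succ : (0 : ℝ) < (#t).choose (k + 1) := by exact_mod_cast Nat.choose_pos hk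
  rw [Finset.expect_eq_sum_div_card, Finset.expect_eq_sum_div_card,
    sum_powersetCard_succ_sum_erase, Finset.card_powersetCard, Finset.card_powersetCard,
    nsmul_eq_mul]
  field_simp
  linear_combination (∑ s ∈ t.powersetCard k, f s) * hchoose

theorem card_filter_mul_le_card_mul_expect {α : Type*} {s : Finset α} {f : α → ℝ} {t : ℝ}
    {p : α → Prop} [DecidablePred p] (hf : ∀ i ∈ s, 0 ≤ f i) (hp : ∀ i ∈ s, p i → t ≤ f i) :
    #{i ∈ s | p i} * t ≤ #s * 𝔼 i ∈ s, f i := by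
  rw [Finset.card_mul_expect, ← nsmul_eq_mul]
  calc #{i ∈ s | p i} • t ≤ ∑ i ∈ s with p i, f i :=
        Finset.card_nsmul_le_sum _ _ _ fun i hi ↦
          hp i (Finset.mem_filter.1 hi).1 (Finset.mem_filter.1 hi).2
    _ ≤ ∑ i ∈ s, f i :=
        Finset.sum_le_sum_of_subset_of_nonneg (Finset.filter_subset _ _) fun i hi _ ↦ hf i hi

theorem expect_powersetCard_sum {t : Finset ι} {c : ℕ} (hc : c ≤ #t) (f : ι → ℝ) :
    𝔼 s ∈ t.powersetCard c, ∑ i ∈ s, f i = c / #t * ∑ i ∈ t, f i := by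
  induction hc using Nat.decreasingInduction with
  | self =>
    rw [Finset.powersetCard_self, Finset.expect_singleton]
    rcases t.eq_empty_or_nonempty with rfl | ht
    · simp
    · rw [div_self (by exact_mod_cast ht.card_ne_zero), one_mul]
  | of_succ c hc ih =>
    have herase : ∀ s ∈ t.powersetCard (c + 1),
        ∑ i ∈ s, ∑ j ∈ s.erase i, f j = c * ∑ j ∈ s, f j := fun s hs ↦ by
      rw [Finset.sum_congr rfl fun i hi ↦ Finset.sum_erase_eq_sub hi, Finset.sum_sub_distrib,
        Finset.sum_const, (Finset.mem_powersetCard.1 hs).2, nsmul_eq_mul]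
      push_cast
      ring
    have hstep := succ_mul_expect_powersetCard hc fun s ↦ ∑ i ∈ s, f i
    rw [Finset.expect_congr rfl herase, ← Finset.mul_expect, ih] at hstep
    refine mul_left_cancel₀ (Nat.cast_add_one_ne_zero c) (hstep.trans ?_)
    push_cast
    ring

variable {E : Type*} [NormedAddCommGroup E] [InnerProductSpace ℝ E]

theorem sum_norm_sq_sum_erase_sub [DecidableEq ι] (w : ι → E) (s : Finset ι) :
    ∑ i ∈ s, (‖∑ j ∈ s.erase i, w j‖ ^ 2 - ∑ j ∈ s.erase i, ‖w j‖ ^ 2)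
      = (#s - 2) * (‖∑ j ∈ s, w j‖ ^ 2 - ∑ j ∈ s, ‖w j‖ ^ 2) := by
  have herase : ∀ i ∈ s, ‖∑ j ∈ s.erase i, w j‖ ^ 2 - ∑ j ∈ s.erase i, ‖w j‖ ^ 2
      = (‖∑ j ∈ s, w j‖ ^ 2 - ∑ j ∈ s, ‖w j‖ ^ 2) + 2 * ‖w i‖ ^ 2
        - 2 * inner ℝ (∑ j ∈ s, w j) (w i) := fun i hi ↦ by
    rw [Finset.sum_erase_eq_sub hi, Finset.sum_erase_eq_sub hi, norm_sub_sq_real]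
    ring
  rw [Finset.sum_congr rfl herase, Finset.sum_sub_distrib, Finset.sum_add_distrib,
    Finset.sum_const, nsmul_eq_mul, ← Finset.mul_sum, ← Finset.mul_sum, ← inner_sum,
    real_inner_self_eq_norm_sq]
  ring

theorem expect_norm_sq_sum_le {t : Finset ι} {c : ℕ} (hc : c ≤ #t) {w : ι → E}
    (hw : ∑ i ∈ t, w i = 0) :
    𝔼 s ∈ t.powersetCard c, ‖∑ i ∈ s, w i‖ ^ 2 ≤ c / #t * ∑ i ∈ t, ‖w i‖ ^ 2 := by
  rw [← expect_powersetCard_sum hc, ← sub_nonpos, ← Finset.expect_sub_distrib]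
  induction hc using Nat.decreasingInduction with
  | self =>
    rw [Finset.powersetCard_self, Finset.expect_singleton, hw, norm_zero, zero_pow two_ne_zero,
      zero_sub, neg_nonpos]
    positivity
  | of_succ c hc ih =>
    rcases Nat.eq_zero_or_pos c with rfl | hc_pos
    · simp
    have herase : ∀ s ∈ t.powersetCard (c + 1),
        ∑ i ∈ s, (‖∑ j ∈ s.erase i, w j‖ ^ 2 - ∑ j ∈ s.erase i, ‖w j‖ ^ 2)
          = (c - 1) * (‖∑ j ∈ s, w j‖ ^ 2 - ∑ j ∈ s, ‖w j‖ ^ 2) := fun s hs ↦ by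
      rw [sum_norm_sq_sum_erase_sub, (Finset.mem_powersetCard.1 hs).2]
      push_cast
      ring
    have hstep := succ_mul_expect_powersetCard hc
      fun s ↦ ‖∑ i ∈ s, w i‖ ^ 2 - ∑ i ∈ s, ‖w i‖ ^ 2
    rw [Finset.expect_congr rfl herase, ← Finset.mul_expect] at hstep
    have hc_one : (1 : ℝ) ≤ c := by exact_mod_cast hc_pos
    exact nonpos_of_mul_nonpos_right
      (hstep.trans_le (mul_nonpos_of_nonneg_of_nonpos (sub_nonneg.2 hc_one) ih))
      (Nat.cast_add_one_pos c)

end RandomSubsets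

section RandomSums

open scoped Finset MatrixOrder ComplexOrder

variable {𝕜 ι m : Type*} [RCLike 𝕜] [DecidableEq m] {W : ι → Matrix m m 𝕜} {a : ℝ}

theorem card_mul_smul_one_le_sum {s : Finset ι} (hlow : ∀ i ∈ s, a • 1 ≤ W i) :
    (#s * a) • 1 ≤ ∑ i ∈ s, W i := by
  rw [mul_smul, Nat.cast_smul_eq_nsmul]
  exact Finset.card_nsmul_le_sum s W _ hlow

theorem posDef_sum_of_smul_one_le {s : Finset ι} (ha : 0 < a) (hlow : ∀ i ∈ s, a • 1 ≤ W i)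
    (hs : 0 < #s) : (∑ i ∈ s, W i).PosDef :=
  posDef_of_smul_one_le (by positivity) (card_mul_smul_one_le_sum hlow)

variable [Fintype m] {l : ℝ}

theorem sum_traceInvPow_sum_erase_le [DecidableEq ι] {s : Finset ι} (ha : 0 < a) (hl : 0 ≤ l)
    (hlow : ∀ i ∈ s, a • 1 ≤ W i) (hup : ∀ i ∈ s, W i ≤ l • 1) {k : ℕ}
    (hs : (2 ^ k : ℕ) * (l / a) < #s) :
    ∑ i ∈ s, traceInvPow (2 ^ k) (∑ j ∈ s.erase i, W j)
      ≤ #s * (1 + (2 ^ k : ℕ) / (#s - (2 ^ k : ℕ) * (l / a)))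
        * traceInvPow (2 ^ k) (∑ i ∈ s, W i) := by
  set p := 2 ^ k
  set B := ∑ i ∈ s, W i with hB_def
  set η := l / (a * #s) with hη_def
  have hs_pos : (0 : ℝ) < #s := lt_of_le_of_lt (by positivity) hs
  have hB : B.PosDef := posDef_sum_of_smul_one_le ha hlow (by exact_mod_cast hs_pos)
  have hpη : p * η = p * (l / a) / #s := by rw [hη_def]; field_simp
  have hpη_lt : p * η < 1 := by rwa [hpη, div_lt_one hs_pos]
  have hWB : ∀ i ∈ s, W i ≤ η • B := fun i hi ↦ calc
    W i ≤ l • 1 := hup i hi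
    _ = η • (#s * a) • 1 := by rw [smul_smul, hη_def]; congr 1; field_simp
    _ ≤ η • B := smul_le_smul_of_nonneg_left (card_mul_smul_one_le_sum hlow) (by positivity)
  have hW : ∀ i ∈ s, 0 ≤ W i := fun i hi ↦
    (PosDef.one.smul ha).posSemidef.nonneg.trans (hlow i hi)
  have hBB : B * B⁻¹ ^ (p + 1) = B⁻¹ ^ p := by
    rw [pow_succ', ← mul_assoc, mul_nonsing_inv _ ((isUnit_iff_isUnit_det _).1 hB.isUnit), one_mul]
  have htrace : ∑ i ∈ s, RCLike.re (W i * B⁻¹ ^ (p + 1)).trace = traceInvPow p B := by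
    rw [traceInvPow, ← hBB, hB_def, Finset.sum_mul, trace_sum, map_sum]
  calc ∑ i ∈ s, traceInvPow p (∑ j ∈ s.erase i, W j)
      ≤ ∑ i ∈ s, (traceInvPow p B
          + p / (1 - p * η) * RCLike.re (W i * B⁻¹ ^ (p + 1)).trace) := by
        refine Finset.sum_le_sum fun i hi ↦ ?_
        rw [Finset.sum_erase_eq_sub hi]
        exact traceInvPow_sub_le k hB (hW i hi) (hWB i hi) hpη_lt
    _ = (#s + p / (1 - p * η)) * traceInvPow p B := by
        rw [Finset.sum_add_distrib, Finset.sum_const, nsmul_eq_mul, ← Finset.mul_sum, htrace,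
          add_mul]
    _ = #s * (1 + p / (#s - p * (l / a))) * traceInvPow p B := by
        have : (#s : ℝ) - p * (l / a) ≠ 0 := (sub_pos.2 hs).ne'
        rw [hpη]
        field_simp

theorem one_add_natCast_div_le {p : ℕ} {x : ℝ} (hx : 0 < x) :
    1 + p / x ≤ ((x + 1) / x) ^ p := by
  calc 1 + p / x = 1 + p * (1 / x) := by rw [mul_one_div]
    _ ≤ (1 + 1 / x) ^ p := one_add_mul_le_pow (by linarith [one_div_pos.2 hx]) p
    _ = ((x + 1) / x) ^ p := by rw [add_div, div_self hx.ne']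

theorem expect_traceInvPow_sum_le {t : Finset ι} {c : ℕ} (ha : 0 < a) (hl : 0 ≤ l)
    (hlow : ∀ i ∈ t, a • 1 ≤ W i) (hup : ∀ i ∈ t, W i ≤ l • 1) (hc : c ≤ #t) {k : ℕ}
    (hq : (2 ^ k : ℕ) * (l / a) < c + 1) :
    𝔼 s ∈ t.powersetCard c, traceInvPow (2 ^ k) (∑ i ∈ s, W i)
      ≤ ((#t + 1 - (2 ^ k : ℕ) * (l / a)) / (c + 1 - (2 ^ k : ℕ) * (l / a))) ^ 2 ^ k
        * traceInvPow (2 ^ k) (∑ i ∈ t, W i) := by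
  set p := 2 ^ k
  set q := p * (l / a)
  induction hc using Nat.decreasingInduction with
  | self =>
    rw [Finset.powersetCard_self, Finset.expect_singleton, div_self (sub_pos.2 hq).ne', one_pow,
      one_mul]
  | of_succ c hc ih =>
    have hx : 0 < c + 1 - q := sub_pos.2 hq
    specialize ih (by push_cast; linarith)
    push_cast at ih
    set A := 𝔼 s ∈ t.powersetCard (c + 1), traceInvPow p (∑ i ∈ s, W i)
    have hstep : 𝔼 s ∈ t.powersetCard c, traceInvPow p (∑ i ∈ s, W i)
        ≤ (1 + p / (c + 1 - q)) * A := by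
      refine le_of_mul_le_mul_left ?_ (Nat.cast_add_one_pos c)
      rw [succ_mul_expect_powersetCard hc, ← mul_assoc, Finset.mul_expect]
      refine Finset.expect_le_expect fun s hs ↦ ?_
      obtain ⟨hst, hcard⟩ := Finset.mem_powersetCard.1 hs
      have := sum_traceInvPow_sum_erase_le (k := k) ha hl (fun i hi ↦ hlow i (hst hi))
        (fun i hi ↦ hup i (hst hi)) (by rw [hcard]; exact_mod_cast hq)
      rw [hcard] at this
      exact_mod_cast this
    have hA : 0 ≤ A := Finset.expect_nonneg fun s hs ↦ by
      obtain ⟨hst, hcard⟩ := Finset.mem_powersetCard.1 hs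
      exact traceInvPow_nonneg p (posDef_sum_of_smul_one_le ha (fun i hi ↦ hlow i (hst hi))
        (hcard ▸ Nat.succ_pos c)).posSemidef
    calc _ ≤ (1 + p / (c + 1 - q)) * A := hstep
      _ ≤ ((c + 1 - q + 1) / (c + 1 - q)) ^ p
          * (((#t + 1 - q) / (c + 1 + 1 - q)) ^ p * traceInvPow p (∑ i ∈ t, W i)) := by
        gcongr
        exact one_add_natCast_div_le hx
      _ = ((#t + 1 - q) / (c + 1 - q)) ^ p * traceInvPow p (∑ i ∈ t, W i) := by
        have : (c + 1 - q + 1 : ℝ) ≠ 0 := by linarith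
        rw [← mul_assoc, ← mul_pow, show (c + 1 + 1 - q : ℝ) = c + 1 - q + 1 by ring]
        congr 2
        field_simp

theorem card_filter_not_smul_one_le_sum_le {t : Finset ι} {c : ℕ} (ha : 0 < a) (hl : 0 ≤ l)
    (hlow : ∀ i ∈ t, a • 1 ≤ W i) (hup : ∀ i ∈ t, W i ≤ l • 1) (hc_pos : 0 < c) (hc : c ≤ #t)
    {k : ℕ} (hq : (2 ^ k : ℕ) * (l / a) < c + 1) {ρ : ℝ} (hρ : 0 < ρ) :
    #{s ∈ t.powersetCard c | ¬ρ • 1 ≤ ∑ i ∈ s, W i}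
      ≤ (ρ * ((#t + 1 - (2 ^ k : ℕ) * (l / a)) / (c + 1 - (2 ^ k : ℕ) * (l / a)))) ^ 2 ^ k
        * traceInvPow (2 ^ k) (∑ i ∈ t, W i) * (#t).choose c := by
  have hposDef : ∀ s ∈ t.powersetCard c, (∑ i ∈ s, W i).PosDef := fun s hs ↦ by
    obtain ⟨hst, hcard⟩ := Finset.mem_powersetCard.1 hs
    exact posDef_sum_of_smul_one_le ha (fun i hi ↦ hlow i (hst hi)) (hcard ▸ hc_pos)
  have markov := card_filter_mul_le_card_mul_expect (t := ρ⁻¹ ^ 2 ^ k)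
    (fun s hs ↦ traceInvPow_nonneg (2 ^ k) (hposDef s hs).posSemidef)
    (fun s hs hlt ↦ not_lt.1 (mt (smul_one_le_of_traceInvPow_lt (hposDef s hs) hρ) hlt))
  rw [inv_pow, ← div_eq_mul_inv, div_le_iff₀ (by positivity), Finset.card_powersetCard] at markov
  grw [markov, expect_traceInvPow_sum_le ha hl hlow hup hc hq, mul_pow]
  apply le_of_eq
  ring

end RandomSums

section MatrixChernoff

open scoped Finset MatrixOrder ComplexOrder

theorem exists_le_two_pow_and_two_pow_le {x : ℝ} (hx : 0 ≤ x) :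
    ∃ k : ℕ, x ≤ (2 ^ k : ℕ) ∧ ((2 ^ k : ℕ) : ℝ) ≤ 2 * x + 2 := by
  obtain ⟨j, hle, hlt⟩ := exists_nat_pow_near (x := x + 1) (by linarith) one_lt_two
  refine ⟨j + 1, ?_, ?_⟩ <;> push_cast
  · linarith
  · rw [pow_succ]
    linarith

theorem mul_pow_le_exp_one_mul_pow {x y : ℝ} {p : ℕ} (hy : Real.log y ≤ p) (hx : 0 ≤ x) :
    y * x ^ p ≤ (Real.exp 1 * x) ^ p := by
  rw [mul_pow, ← Real.exp_nat_mul, mul_one]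
  gcongr
  exact (Real.le_exp_log y).trans (Real.exp_le_exp.2 hy)

theorem mul_div_sub_pow_le {c N q : ℝ} {p : ℕ} (hp : p ≠ 0) (hc : 0 < c) (hcN : c ≤ N)
    (hq : 1 ≤ q) (hqc : q ≤ 0.05 * c) :
    (Real.exp 1 * (c / (10 * N) * ((N + 1 - q) / (c + 1 - q)))) ^ p ≤ 0.3 := by
  have hN : 0 < N := hc.trans_le hcN
  have hc_sub : 0 < c + 1 - q := by linarith
  have hN_sub : 0 ≤ N + 1 - q := by linarith
  have hratio : c / (10 * N) * ((N + 1 - q) / (c + 1 - q)) ≤ 2 / 19 := by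
    rw [div_mul_div_comm, div_le_div_iff₀ (by positivity) (by norm_num)]
    have hnum : c * (N + 1 - q) ≤ c * N := by gcongr; linarith
    have hden : N * (0.95 * c) ≤ N * (c + 1 - q) := by gcongr; linarith
    linarith
  have hbase : Real.exp 1 * (c / (10 * N) * ((N + 1 - q) / (c + 1 - q))) ≤ 0.3 := by
    grw [hratio, Real.exp_one_lt_d9]
    norm_num
  exact (pow_le_of_le_one (by positivity) (hbase.trans (by norm_num)) hp).trans hbase

variable {𝕜 ι m : Type*} [RCLike 𝕜] [DecidableEq m] {A : ι → Matrix m m 𝕜} {L : ℝ}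
  {t : Finset ι}

theorem one_le_card_mul_of_sum_eq_one [Nonempty m] (hAL : ∀ i ∈ t, A i ≤ L • 1)
    (hsum : ∑ i ∈ t, A i = 1) : 1 ≤ #t * L := by
  have hle : (1 : Matrix m m 𝕜) ≤ (#t * L) • 1 := by
    rw [mul_smul, Nat.cast_smul_eq_nsmul]
    exact hsum.ge.trans (Finset.sum_le_card_nsmul t A _ hAL)
  obtain ⟨j⟩ := ‹Nonempty m›
  have hdiag := (le_iff.1 hle).diag_nonneg (i := j)
  rw [Matrix.sub_apply, Matrix.smul_apply, one_apply_eq, sub_nonneg,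
    RCLike.real_smul_eq_coe_mul, mul_one] at hdiag
  exact_mod_cast hdiag

theorem smul_one_le_sum_add_smul_one_iff {s : Finset ι} {a b : ℝ} :
    (b + #s * a) • 1 ≤ ∑ i ∈ s, (A i + a • 1) ↔ b • 1 ≤ ∑ i ∈ s, A i := by
  rw [Finset.sum_add_distrib, Finset.sum_const, ← Nat.cast_smul_eq_nsmul ℝ, smul_smul, add_smul,
    add_le_add_iff_right]

variable [Fintype m]

-- Adding `a • 1` to each summand makes the sums over erased subsets positive definite.
theorem card_filter_not_smul_one_le_sum_le_of_nonneg {c k : ℕ} {a b q : ℝ} (ha : 0 < a)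
    (hb : 0 ≤ b) (hL : 0 ≤ L) (hA : ∀ i ∈ t, 0 ≤ A i) (hAL : ∀ i ∈ t, A i ≤ L • 1)
    (hsum : ∑ i ∈ t, A i = 1) (hc_pos : 0 < c) (hc : c ≤ #t)
    (hq : q = (2 ^ k : ℕ) * ((L + a) / a)) (hqc : q < c + 1) :
    #{s ∈ t.powersetCard c | ¬b • 1 ≤ ∑ i ∈ s, A i}
      ≤ Fintype.card m * ((b + c * a) * ((#t + 1 - q) / (c + 1 - q))) ^ 2 ^ k
        * (#t).choose c := by
  have hsum_reg : ∑ i ∈ t, (A i + a • 1) = (1 + #t * a) • 1 := by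
    rw [Finset.sum_add_distrib, hsum, Finset.sum_const, ← Nat.cast_smul_eq_nsmul ℝ, smul_smul,
      add_smul, one_smul]
  have hpow : (1 + #t * a)⁻¹ ^ 2 ^ k ≤ 1 :=
    pow_le_one₀ (by positivity) (inv_le_one_of_one_le₀ (le_add_of_nonneg_right (by positivity)))
  have hratio : 0 ≤ (b + c * a) * ((#t + 1 - q) / (c + 1 - q)) := by
    have : (c : ℝ) ≤ #t := by exact_mod_cast hc
    exact mul_nonneg (by positivity) (div_nonneg (by linarith) (by linarith))
  have hfilter : {s ∈ t.powersetCard c | ¬b • 1 ≤ ∑ i ∈ s, A i}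
      = {s ∈ t.powersetCard c | ¬(b + c * a) • 1 ≤ ∑ i ∈ s, (A i + a • 1)} :=
    Finset.filter_congr fun s hs ↦ by
      rw [← (Finset.mem_powersetCard.1 hs).2, smul_one_le_sum_add_smul_one_iff]
  subst hq
  rw [hfilter]
  grw [card_filter_not_smul_one_le_sum_le ha (add_nonneg hL ha.le)
      (fun i hi ↦ le_add_of_nonneg_left (hA i hi))
      (fun i hi ↦ by rw [add_smul]; exact add_le_add_left (hAL i hi) _)
      hc_pos hc hqc (by positivity), hsum_reg, traceInvPow_smul_one, hpow]
  apply le_of_eq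
  ring

/-- A matrix Chernoff bound for sampling without replacement. -/
theorem card_filter_not_smul_one_le_sum_le_of_sum_eq_one [Nonempty m] {c : ℕ}
    (hA : ∀ i ∈ t, 0 ≤ A i) (hAL : ∀ i ∈ t, A i ≤ L • 1) (hsum : ∑ i ∈ t, A i = 1)
    (hc : 840 * (#t * L) * (Real.log (Fintype.card m) + 1) ≤ c) (hct : c ≤ #t) :
    #{s ∈ t.powersetCard c | ¬(c / (20 * #t) : ℝ) • 1 ≤ ∑ i ∈ s, A i}
      ≤ (0.3 : ℝ) * (#t).choose c := by
  have htL : 1 ≤ #t * L := one_le_card_mul_of_sum_eq_one hAL hsum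
  have hlog : 0 ≤ Real.log (Fintype.card m) := Real.log_natCast_nonneg _
  have hc_pos : (0 : ℝ) < c := by nlinarith
  have hct_real : (c : ℝ) ≤ #t := by exact_mod_cast hct
  have ht_pos : (0 : ℝ) < #t := hc_pos.trans_le hct_real
  have hL : 0 < L := pos_of_mul_pos_right (zero_lt_one.trans_le htL) ht_pos.le
  obtain ⟨k, hlog_le, hle_log⟩ := exists_le_two_pow_and_two_pow_le hlog
  have hp : (1 : ℝ) ≤ (2 ^ k : ℕ) := by exact_mod_cast Nat.one_le_two_pow
  set a : ℝ := 1 / (20 * #t) with ha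
  set q : ℝ := (2 ^ k : ℕ) * ((L + a) / a) with hq_def
  have hq_eq : q = (2 ^ k : ℕ) * (20 * (#t * L) + 1) := by
    rw [hq_def, ha]
    field_simp
  have hq : 1 ≤ q := hq_eq ▸ one_le_mul_of_one_le_of_one_le hp (by linarith)
  have hqc : q ≤ 0.05 * c := calc
    q ≤ (2 * Real.log (Fintype.card m) + 2) * (21 * (#t * L)) := by rw [hq_eq]; gcongr; linarith
    _ ≤ 0.05 * c := by linarith
  have hρ : (c / (20 * #t) + c * a : ℝ) = c / (10 * #t) := by
    rw [ha]
    field_simp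
    norm_num
  have hratio : 0 ≤ c / (10 * #t) * ((#t + 1 - q) / (c + 1 - q)) :=
    mul_nonneg (by positivity) (div_nonneg (by linarith) (by linarith))
  grw [card_filter_not_smul_one_le_sum_le_of_nonneg (by positivity) (by positivity) hL.le hA hAL
      hsum (by exact_mod_cast hc_pos) hct hq_def (by linarith), hρ,
    mul_pow_le_exp_one_mul_pow hlog_le hratio,
    mul_div_sub_pow_le (pow_ne_zero k two_ne_zero) hc_pos hct_real hq hqc]

end MatrixChernoff

section GoodSamples

open scoped Finset MatrixOrder

variable {ι : Type*}

theorem card_le_card_filter_add_card_filter_not {α : Type*} {s : Finset α} {p q r : α → Prop}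
    (h : ∀ i ∈ s, q i → r i → p i) :
    #s ≤ #{i ∈ s | p i} + (#{i ∈ s | ¬q i} + #{i ∈ s | ¬r i}) := by
  refine (Finset.card_le_card fun i hi ↦ ?_).trans
    ((Finset.card_union_le _ _).trans (Nat.add_le_add_left (Finset.card_union_le _ _) _))
  simp only [Finset.mem_union, Finset.mem_filter, hi, true_and]
  have := h i hi
  tauto

/-- The two events under which least squares on the rows `u i`, `i ∈ s`, sampled from `t` has a
small error: the quadratic form of the sampled rows is bounded below by `δ > 0`, and the sampled
sum of the `r i • u i`, where `r` is the residual of the full problem, is small in norm. -/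
structure IsGoodSample {E : Type*} [NormedAddCommGroup E] [InnerProductSpace ℝ E] (δ ε : ℝ)
    (u : ι → E) (r : ι → ℝ) (t s : Finset ι) : Prop where
  pos : 0 < δ
  le_sum_inner_sq : ∀ z, δ * ‖z‖ ^ 2 ≤ ∑ i ∈ s, inner ℝ (u i) z ^ 2
  norm_sum_sq_le : ‖∑ i ∈ s, r i • u i‖ ^ 2 ≤ ε * (δ / 2) ^ 2 * ∑ i ∈ t, r i ^ 2

section InnerProductSpace

variable {E : Type*} [NormedAddCommGroup E] [InnerProductSpace ℝ E] {u : ι → E} {r : ι → ℝ}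

theorem sum_inner_sq_le_two_mul_norm_mul_norm {s : Finset ι} {z : E}
    (hz : ∑ i ∈ s, (r i - inner ℝ (u i) z) ^ 2 ≤ ∑ i ∈ s, r i ^ 2) :
    ∑ i ∈ s, inner ℝ (u i) z ^ 2 ≤ 2 * (‖∑ i ∈ s, r i • u i‖ * ‖z‖) := by
  have hexpand : ∑ i ∈ s, (r i - inner ℝ (u i) z) ^ 2
      = ∑ i ∈ s, r i ^ 2 - 2 * inner ℝ (∑ i ∈ s, r i • u i) z
        + ∑ i ∈ s, inner ℝ (u i) z ^ 2 := by
    simp only [sum_inner, real_inner_smul_left, Finset.mul_sum, ← Finset.sum_sub_distrib,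
      ← Finset.sum_add_distrib]
    exact Finset.sum_congr rfl fun i _ ↦ by ring
  linarith [real_inner_le_norm (∑ i ∈ s, r i • u i) z]

theorem IsGoodSample.norm_sq_le {δ ε : ℝ} {t s : Finset ι} (h : IsGoodSample δ ε u r t s)
    {z : E} (hz : ∑ i ∈ s, (r i - inner ℝ (u i) z) ^ 2 ≤ ∑ i ∈ s, r i ^ 2) :
    ‖z‖ ^ 2 ≤ ε * ∑ i ∈ t, r i ^ 2 := by
  have hδ := h.pos
  have hle : δ / 2 * ‖z‖ ≤ ‖∑ i ∈ s, r i • u i‖ := by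
    rcases (norm_nonneg z).eq_or_lt with hz_zero | hz_pos
    · simp [← hz_zero]
    · refine le_of_mul_le_mul_right ?_ hz_pos
      linarith [(h.le_sum_inner_sq z).trans (sum_inner_sq_le_two_mul_norm_mul_norm hz)]
  refine le_of_mul_le_mul_left ?_ (show 0 < (δ / 2) ^ 2 by positivity)
  calc (δ / 2) ^ 2 * ‖z‖ ^ 2 = (δ / 2 * ‖z‖) ^ 2 := by ring
    _ ≤ ‖∑ i ∈ s, r i • u i‖ ^ 2 := by gcongr
    _ ≤ (δ / 2) ^ 2 * (ε * ∑ i ∈ t, r i ^ 2) := by linarith [h.norm_sum_sq_le]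

theorem card_filter_not_norm_sq_sum_smul_le {t : Finset ι} {c : ℕ} {L θ η : ℝ}
    (hL : ∀ i ∈ t, ‖u i‖ ^ 2 ≤ L) (hr : ∑ i ∈ t, r i • u i = 0) (hc : c ≤ #t) (hθ : 0 < θ)
    (hη : 0 ≤ η) (hcL : c / #t * L ≤ η * θ) :
    #{s ∈ t.powersetCard c | ¬‖∑ i ∈ s, r i • u i‖ ^ 2 ≤ θ * ∑ i ∈ t, r i ^ 2}
      ≤ η * (#t).choose c := by
  rcases (Finset.sum_nonneg fun i (_ : i ∈ t) ↦ sq_nonneg (r i)).eq_or_lt with hR | hR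
  · have hr_zero : ∀ i ∈ t, r i = 0 := fun i hi ↦
      pow_eq_zero_iff two_ne_zero |>.1
        ((Finset.sum_eq_zero_iff_of_nonneg fun i _ ↦ sq_nonneg (r i)).1 hR.symm i hi)
    rw [Finset.filter_false_of_mem, Finset.card_empty, Nat.cast_zero]
    · positivity
    · intro s hs
      rw [Finset.sum_eq_zero fun i hi ↦ by
        rw [hr_zero i ((Finset.mem_powersetCard.1 hs).1 hi), zero_smul], ← hR]
      simp
  · have markov := card_filter_mul_le_card_mul_expect (s := t.powersetCard c)
      (f := fun s ↦ ‖∑ i ∈ s, r i • u i‖ ^ 2) (fun _ _ ↦ by positivity)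
      fun s _ (hs : ¬‖∑ i ∈ s, r i • u i‖ ^ 2 ≤ θ * ∑ i ∈ t, r i ^ 2) ↦ (not_le.1 hs).le
    refine le_of_mul_le_mul_right (markov.trans ?_) (mul_pos hθ hR)
    have hsum : ∑ i ∈ t, ‖r i • u i‖ ^ 2 ≤ L * ∑ i ∈ t, r i ^ 2 := by
      rw [Finset.mul_sum]
      refine Finset.sum_le_sum fun i hi ↦ ?_
      rw [norm_smul, mul_pow, Real.norm_eq_abs, sq_abs, mul_comm]
      gcongr
      exact hL i hi
    rw [Finset.card_powersetCard]
    calc (#t).choose c * 𝔼 s ∈ t.powersetCard c, ‖∑ i ∈ s, r i • u i‖ ^ 2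
        ≤ (#t).choose c * (c / #t * (L * ∑ i ∈ t, r i ^ 2)) := by
          grw [expect_norm_sq_sum_le hc hr, hsum]
      _ = (#t).choose c * (c / #t * L * ∑ i ∈ t, r i ^ 2) := by ring
      _ ≤ (#t).choose c * (η * θ * ∑ i ∈ t, r i ^ 2) := by gcongr
      _ = η * (#t).choose c * (θ * ∑ i ∈ t, r i ^ 2) := by ring

end InnerProductSpace

variable {m : Type*} {u : ι → EuclideanSpace ℝ m}

theorem posSemidef_sum_vecMulVec [Finite m] (s : Finset ι) :
    (∑ i ∈ s, vecMulVec (u i) (u i)).PosSemidef :=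
  posSemidef_sum s fun i _ ↦ by simpa using posSemidef_vecMulVec_self_star (u i).ofLp

theorem isHermitian_smul_one [DecidableEq m] (δ : ℝ) : (δ • (1 : Matrix m m ℝ)).IsHermitian :=
  isHermitian_one.smul (IsSelfAdjoint.all δ)

variable [Fintype m]

theorem le_iff_forall_dotProduct_mulVec_le {A B : Matrix m m ℝ} (hA : A.IsHermitian)
    (hB : B.IsHermitian) :
    A ≤ B ↔ ∀ z : EuclideanSpace ℝ m, z ⬝ᵥ A *ᵥ z ≤ z ⬝ᵥ B *ᵥ z := by
  simp only [le_iff, posSemidef_iff_dotProduct_mulVec, hB.sub hA, true_and, sub_mulVec,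
    dotProduct_sub, sub_nonneg, star_trivial]
  exact ⟨fun h z ↦ h z.ofLp, fun h x ↦ h (WithLp.toLp 2 x)⟩

theorem dotProduct_sum_vecMulVec_mulVec (s : Finset ι) (z : EuclideanSpace ℝ m) :
    z ⬝ᵥ (∑ i ∈ s, vecMulVec (u i) (u i)) *ᵥ z = ∑ i ∈ s, inner ℝ (u i) z ^ 2 := by
  simp only [sum_mulVec, dotProduct_sum, vecMulVec_mulVec, EuclideanSpace.inner_eq_star_dotProduct]
  refine Finset.sum_congr rfl fun i _ ↦ ?_
  simp [pow_two, dotProduct_comm]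

section DecidableEq

variable [DecidableEq m]

theorem dotProduct_smul_one_mulVec (δ : ℝ) (z : EuclideanSpace ℝ m) :
    z ⬝ᵥ (δ • (1 : Matrix m m ℝ)) *ᵥ z = δ * ‖z‖ ^ 2 := by
  rw [smul_mulVec, one_mulVec, dotProduct_smul, smul_eq_mul, EuclideanSpace.real_norm_sq_eq]
  simp only [dotProduct, pow_two]

theorem smul_one_le_sum_vecMulVec_iff {δ : ℝ} {s : Finset ι} :
    δ • 1 ≤ ∑ i ∈ s, vecMulVec (u i) (u i)
      ↔ ∀ z, δ * ‖z‖ ^ 2 ≤ ∑ i ∈ s, inner ℝ (u i) z ^ 2 := by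
  simp only [le_iff_forall_dotProduct_mulVec_le (isHermitian_smul_one δ)
    (posSemidef_sum_vecMulVec s).isHermitian, dotProduct_smul_one_mulVec,
    dotProduct_sum_vecMulVec_mulVec]

theorem sum_vecMulVec_le_smul_one_iff {δ : ℝ} {s : Finset ι} :
    ∑ i ∈ s, vecMulVec (u i) (u i) ≤ δ • 1
      ↔ ∀ z, ∑ i ∈ s, inner ℝ (u i) z ^ 2 ≤ δ * ‖z‖ ^ 2 := by
  simp only [le_iff_forall_dotProduct_mulVec_le (posSemidef_sum_vecMulVec s).isHermitian
    (isHermitian_smul_one δ), dotProduct_smul_one_mulVec, dotProduct_sum_vecMulVec_mulVec]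

theorem vecMulVec_self_le_smul_one {i : ι} {L : ℝ} (hL : ‖u i‖ ^ 2 ≤ L) :
    vecMulVec (u i) (u i) ≤ L • 1 := by
  rw [← Finset.sum_singleton (fun i ↦ vecMulVec (u i) (u i)) i, sum_vecMulVec_le_smul_one_iff]
  intro z
  rw [Finset.sum_singleton]
  grw [← sq_abs, abs_real_inner_le_norm, mul_pow, hL]

theorem sum_vecMulVec_eq_one {t : Finset ι}
    (hframe : ∀ z, ∑ i ∈ t, inner ℝ (u i) z ^ 2 = ‖z‖ ^ 2) :
    ∑ i ∈ t, vecMulVec (u i) (u i) = 1 := by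
  rw [← one_smul ℝ 1]
  exact le_antisymm (sum_vecMulVec_le_smul_one_iff.2 fun z ↦ by rw [hframe, one_mul])
    (smul_one_le_sum_vecMulVec_iff.2 fun z ↦ by rw [hframe, one_mul])

end DecidableEq

variable [Nonempty m] {t : Finset ι} {c : ℕ} {L : ℝ}

theorem card_filter_not_forall_le_sum_inner_sq_le
    (hframe : ∀ z, ∑ i ∈ t, inner ℝ (u i) z ^ 2 = ‖z‖ ^ 2) (hL : ∀ i ∈ t, ‖u i‖ ^ 2 ≤ L)
    (hc : 840 * (#t * L) * (Real.log (Fintype.card m) + 1) ≤ c) (hct : c ≤ #t) :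
    #{s ∈ t.powersetCard c |
        ¬∀ z, (c / (20 * #t) : ℝ) * ‖z‖ ^ 2 ≤ ∑ i ∈ s, inner ℝ (u i) z ^ 2}
      ≤ (0.3 : ℝ) * (#t).choose c := by
  simp only [← smul_one_le_sum_vecMulVec_iff]
  exact card_filter_not_smul_one_le_sum_le_of_sum_eq_one
    (fun i _ ↦ by simpa using (posSemidef_sum_vecMulVec {i}).nonneg)
    (fun i hi ↦ vecMulVec_self_le_smul_one (hL i hi)) (sum_vecMulVec_eq_one hframe) hc hct

theorem half_mul_choose_le_card_filter_isGoodSample {r : ι → ℝ}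
    (hframe : ∀ z, ∑ i ∈ t, inner ℝ (u i) z ^ 2 = ‖z‖ ^ 2) (hL : ∀ i ∈ t, ‖u i‖ ^ 2 ≤ L)
    (hr : ∑ i ∈ t, r i • u i = 0)
    (hc : 1000 * (#t * L) * (Real.log (Fintype.card m) + 7) ≤ c) (hct : c ≤ #t) :
    (1 / 2 : ℝ) * (#t).choose c
      ≤ #{s ∈ t.powersetCard c | IsGoodSample (c / (20 * #t)) 1.2 u r t s} := by
  have hlog : 0 ≤ Real.log (Fintype.card m) := Real.log_natCast_nonneg _
  have htL : 1 ≤ #t * L := one_le_card_mul_of_sum_eq_one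
    (fun i hi ↦ vecMulVec_self_le_smul_one (hL i hi)) (sum_vecMulVec_eq_one hframe)
  have hc_pos : (0 : ℝ) < c := by nlinarith
  have ht_pos : (0 : ℝ) < #t := hc_pos.trans_le (by exact_mod_cast hct)
  have hgram := card_filter_not_forall_le_sum_inner_sq_le hframe hL (by nlinarith) hct
  have hcross := card_filter_not_norm_sq_sum_smul_le (η := 0.2)
    (θ := 1.2 * (c / (20 * #t) / 2) ^ 2) hL hr hct (by positivity) (by norm_num) (by
      rw [div_mul_eq_mul_div, div_le_iff₀ ht_pos]
      field_simp
      nlinarith)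
  have hcover := card_le_card_filter_add_card_filter_not (s := t.powersetCard c)
    (p := fun s ↦ IsGoodSample (c / (20 * #t)) 1.2 u r t s)
    (q := fun s ↦ ∀ z, (c / (20 * #t) : ℝ) * ‖z‖ ^ 2 ≤ ∑ i ∈ s, inner ℝ (u i) z ^ 2)
    (r := fun s ↦
      ‖∑ i ∈ s, r i • u i‖ ^ 2 ≤ 1.2 * (c / (20 * #t) / 2) ^ 2 * ∑ i ∈ t, r i ^ 2)
    fun _ _ h₁ h₂ ↦ ⟨by positivity, h₁, h₂⟩
  rw [Finset.card_powersetCard, ← Nat.cast_le (α := ℝ), Nat.cast_add, Nat.cast_add] at hcover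
  linarith

end GoodSamples

section EuclideanRows

open scoped Finset

variable {ι m : Type*}

/-- The rows of a matrix as vectors of a Euclidean space, rather than of `m → ℝ` with its supremum
norm. -/
noncomputable def euclideanRow (U : Matrix ι m ℝ) (i : ι) : EuclideanSpace ℝ m :=
  WithLp.toLp 2 (U i)

variable {U : Matrix ι m ℝ}

theorem sum_smul_euclideanRow [Fintype ι] (r : ι → ℝ) :
    ∑ i, r i • euclideanRow U i = WithLp.toLp 2 (Uᵀ *ᵥ r) := by
  ext j
  simp [euclideanRow, mulVec, dotProduct, mul_comm]

variable [Fintype m]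

theorem inner_euclideanRow (i : ι) (z : EuclideanSpace ℝ m) :
    inner ℝ (euclideanRow U i) z = (U *ᵥ z) i := by
  rw [EuclideanSpace.inner_eq_star_dotProduct, dotProduct_comm]
  rfl

theorem norm_euclideanRow_sq (i : ι) : ‖euclideanRow U i‖ ^ 2 = (U * Uᵀ) i i := by
  rw [← real_inner_self_eq_norm_sq, inner_euclideanRow]
  rfl

variable [Fintype ι]

theorem sum_inner_euclideanRow_sq [DecidableEq m] (hU : Uᵀ * U = 1) (z : EuclideanSpace ℝ m) :
    ∑ i, inner ℝ (euclideanRow U i) z ^ 2 = ‖z‖ ^ 2 := by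
  simp only [inner_euclideanRow, pow_two, ← real_inner_self_eq_norm_mul_norm]
  change (U *ᵥ z) ⬝ᵥ (U *ᵥ z) = _
  rw [dotProduct_mulVec, ← mulVec_transpose, mulVec_mulVec, hU, one_mulVec,
    EuclideanSpace.inner_eq_star_dotProduct, star_trivial]

theorem half_mul_choose_le_card_filter_isGoodSample_euclideanRow [DecidableEq m] [Nonempty m]
    {r : ι → ℝ} {c : ℕ} {L : ℝ} (hU : Uᵀ * U = 1) (hL : ∀ i, (U * Uᵀ) i i ≤ L)
    (hr : Uᵀ *ᵥ r = 0)
    (hc : 1000 * (Fintype.card ι * L) * (Real.log (Fintype.card m) + 7) ≤ c)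
    (hcι : c ≤ Fintype.card ι) :
    (1 / 2 : ℝ) * (Fintype.card ι).choose c
      ≤ #{s ∈ Finset.univ.powersetCard c |
          IsGoodSample (c / (20 * Fintype.card ι)) 1.2 (euclideanRow U) r Finset.univ s} :=
  half_mul_choose_le_card_filter_isGoodSample (t := Finset.univ) (sum_inner_euclideanRow_sq hU)
    (fun i _ ↦ (norm_euclideanRow_sq i).trans_le (hL i)) (by rw [sum_smul_euclideanRow, hr]; rfl)
    hc hcι

end EuclideanRows

section Projection

variable {K ι m : Type*} [Fintype m]

theorem isUnit_of_rank_eq_card [Field K] [DecidableEq m] {A : Matrix m m K}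
    (hA : A.rank = Fintype.card m) : IsUnit A := by
  rw [← mulVec_surjective_iff_isUnit]
  refine LinearMap.range_eq_top.1 (Submodule.eq_top_of_finrank_eq ?_ : A.mulVecLin.range = ⊤)
  rw [Module.finrank_fintype_fun_eq_card, ← hA, rank]

theorem isUnit_det_transpose_mul_self_of_rank_eq_card [Fintype ι] [Field K] [LinearOrder K]
    [IsStrictOrderedRing K] [DecidableEq m] {X : Matrix ι m K}
    (hX : X.rank = Fintype.card m) : IsUnit (Xᵀ * X).det :=
  (isUnit_iff_isUnit_det _).1 (isUnit_of_rank_eq_card (by rw [rank_transpose_mul_self, hX]))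

theorem eq_of_isSelfAdjoint_of_mul_eq {R : Type*} [Mul R] [StarMul R] {a b : R}
    (ha : IsSelfAdjoint a) (hb : IsSelfAdjoint b) (hab : a * b = b) (hba : b * a = a) :
    a = b := by
  calc a = star (b * a) := by rw [hba, ha.star_eq]
    _ = b := by rw [star_mul, ha.star_eq, hb.star_eq, hab]

variable [Fintype ι] [CommRing K]

theorem mul_eq_of_range_mulVecLin_le {m' : Type*} [Fintype m'] {P : Matrix ι ι K}
    {A : Matrix ι m K} {B : Matrix ι m' K} (hP : P * A = A)
    (hrange : LinearMap.range B.mulVecLin ≤ LinearMap.range A.mulVecLin) : P * B = B := by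
  refine ext_iff_mulVec.2 fun v ↦ ?_
  obtain ⟨w, hw : A *ᵥ w = B *ᵥ v⟩ := hrange ⟨v, rfl⟩
  rw [← mulVec_mulVec, ← hw, mulVec_mulVec, hP]

variable [DecidableEq m]

theorem mul_nonsing_inv_transpose_mul_self_mul {X : Matrix ι m K} (hX : IsUnit (Xᵀ * X).det) :
    X * (Xᵀ * X)⁻¹ * Xᵀ * X = X := by
  rw [Matrix.mul_assoc, Matrix.mul_assoc, nonsing_inv_mul _ hX, Matrix.mul_one]

theorem transpose_mulVec_sub_mulVec_eq_zero {X : Matrix ι m K} (hX : IsUnit (Xᵀ * X).det)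
    (y : ι → K) : Xᵀ *ᵥ (y - X *ᵥ ((Xᵀ * X)⁻¹ * Xᵀ) *ᵥ y) = 0 := by
  rw [mulVec_sub, mulVec_mulVec, mulVec_mulVec, ← Matrix.mul_assoc, mul_nonsing_inv _ hX,
    Matrix.one_mul, sub_self]

theorem mul_transpose_eq_of_range_eq {X U : Matrix ι m ℝ} (hX : IsUnit (Xᵀ * X).det)
    (hU : Uᵀ * U = 1) (hrange : LinearMap.range U.mulVecLin = LinearMap.range X.mulVecLin) :
    U * Uᵀ = X * (Xᵀ * X)⁻¹ * Xᵀ := by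
  have hUX : U * Uᵀ * X = X :=
    mul_eq_of_range_mulVecLin_le (by rw [Matrix.mul_assoc, hU, Matrix.mul_one]) hrange.ge
  have hXU : X * (Xᵀ * X)⁻¹ * Xᵀ * U = U :=
    mul_eq_of_range_mulVecLin_le (mul_nonsing_inv_transpose_mul_self_mul hX) hrange.le
  refine eq_of_isSelfAdjoint_of_mul_eq (isHermitian_mul_conjTranspose_self U)
    (isHermitian_mul_mul_conjTranspose X (isHermitian_conjTranspose_mul_self X).inv) ?_ ?_
  · rw [← Matrix.mul_assoc, ← Matrix.mul_assoc, hUX]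
  · rw [← Matrix.mul_assoc, hXU]

end Projection

section SingularValues

variable {n d : ℕ} {X : Matrix (Fin n) (Fin d) ℝ}

theorem vnorm_eq_norm_toLp (v : Fin n → ℝ) : vnorm v = ‖WithLp.toLp 2 v‖ := by
  simp [vnorm, EuclideanSpace.norm_eq]

theorem vnorm_sq_eq_sum (v : Fin n → ℝ) : vnorm v ^ 2 = ∑ i, v i ^ 2 := by
  rw [vnorm_eq_norm_toLp, EuclideanSpace.real_norm_sq_eq]

theorem vnorm_nonneg (v : Fin n → ℝ) : 0 ≤ vnorm v := Real.sqrt_nonneg _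

theorem vnorm_smul (a : ℝ) (v : Fin n → ℝ) : vnorm (a • v) = |a| * vnorm v := by
  simp only [vnorm_eq_norm_toLp, WithLp.toLp_smul, norm_smul, Real.norm_eq_abs]

theorem vnorm_pos_iff {v : Fin n → ℝ} : 0 < vnorm v ↔ v ≠ 0 := by
  rw [vnorm_eq_norm_toLp, norm_pos_iff, Ne, WithLp.toLp_eq_zero]

theorem vnorm_inv_smul_self {v : Fin n → ℝ} (hv : v ≠ 0) : vnorm ((vnorm v)⁻¹ • v) = 1 := by
  have hpos := vnorm_pos_iff.2 hv
  rw [vnorm_smul, abs_of_pos (inv_pos.2 hpos), inv_mul_cancel₀ hpos.ne']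

theorem vnorm_mulVec_eq (X : Matrix (Fin n) (Fin d) ℝ) {v : Fin d → ℝ} (hv : v ≠ 0) :
    vnorm (X *ᵥ v) = vnorm (X *ᵥ (vnorm v)⁻¹ • v) * vnorm v := by
  have hpos := vnorm_pos_iff.2 hv
  rw [mulVec_smul, vnorm_smul, abs_of_pos (inv_pos.2 hpos)]
  field_simp

open scoped Norms.L2Operator in
theorem vnorm_mulVec_le_norm_mul (X : Matrix (Fin n) (Fin d) ℝ) (v : Fin d → ℝ) :
    vnorm (X *ᵥ v) ≤ ‖X‖ * vnorm v := by
  rw [vnorm_eq_norm_toLp, vnorm_eq_norm_toLp]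
  exact l2_opNorm_mulVec X (WithLp.toLp 2 v)

theorem sigmaMin_mul_vnorm_le (X : Matrix (Fin n) (Fin d) ℝ) (v : Fin d → ℝ) :
    sigmaMin X * vnorm v ≤ vnorm (X *ᵥ v) := by
  rcases eq_or_ne v 0 with rfl | hv
  · simp [vnorm]
  rw [vnorm_mulVec_eq X hv]
  refine mul_le_mul_of_nonneg_right (csInf_le ⟨0, ?_⟩ ⟨_, vnorm_inv_smul_self hv, rfl⟩)
    (vnorm_nonneg v)
  rintro _ ⟨w, -, rfl⟩
  exact vnorm_nonneg _

open scoped Norms.L2Operator in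
theorem vnorm_mulVec_le_sigmaMax_mul (X : Matrix (Fin n) (Fin d) ℝ) (v : Fin d → ℝ) :
    vnorm (X *ᵥ v) ≤ sigmaMax X * vnorm v := by
  rcases eq_or_ne v 0 with rfl | hv
  · simp [vnorm]
  rw [vnorm_mulVec_eq X hv]
  refine mul_le_mul_of_nonneg_right (le_csSup ⟨‖X‖, ?_⟩ ⟨_, vnorm_inv_smul_self hv, rfl⟩)
    (vnorm_nonneg v)
  rintro _ ⟨w, hw, rfl⟩
  simpa only [hw, mul_one] using vnorm_mulVec_le_norm_mul X w

open scoped Norms.L2Operator in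
theorem sigmaMin_pos [NeZero d] (hX : IsUnit (Xᵀ * X).det) : 0 < sigmaMin X := by
  obtain ⟨G, hG⟩ : ∃ G : Matrix (Fin d) (Fin n) ℝ, G * X = 1 :=
    ⟨(Xᵀ * X)⁻¹ * Xᵀ, by rw [Matrix.mul_assoc, nonsing_inv_mul _ hX]⟩
  have hle : ∀ v, vnorm v ≤ ‖G‖ * vnorm (X *ᵥ v) := fun v ↦ by
    simpa only [mulVec_mulVec, hG, one_mulVec] using vnorm_mulVec_le_norm_mul G (X *ᵥ v)
  have hunit : vnorm (Pi.single 0 1 : Fin d → ℝ) = 1 := by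
    simp [vnorm_eq_norm_toLp]
  have hG_pos : 0 < ‖G‖ := pos_of_mul_pos_left
    (zero_lt_one.trans_le (hunit.ge.trans (hle _))) (vnorm_nonneg _)
  refine (inv_pos.2 hG_pos).trans_le (le_csInf ⟨_, _, hunit, rfl⟩ ?_)
  rintro _ ⟨v, hv, rfl⟩
  exact (inv_le_iff_one_le_mul₀' hG_pos).2 (hv.ge.trans (hle v))

end SingularValues

section LeastSquares

variable {n d : ℕ} {X : Matrix (Fin n) (Fin d) ℝ} {y : Fin n → ℝ} {β β' : Fin d → ℝ} {ε : ℝ}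

theorem vnorm_sub_mulVec_sq_eq_add (hβ : Xᵀ *ᵥ (y - X *ᵥ β) = 0) (β' : Fin d → ℝ) :
    vnorm (y - X *ᵥ β') ^ 2 = vnorm (y - X *ᵥ β) ^ 2 + vnorm (X *ᵥ (β - β')) ^ 2 := by
  have horth : inner ℝ (WithLp.toLp 2 (y - X *ᵥ β)) (WithLp.toLp 2 (X *ᵥ (β - β'))) = 0 := by
    rw [EuclideanSpace.inner_eq_star_dotProduct, star_trivial, dotProduct_comm,
      dotProduct_mulVec, ← mulVec_transpose, hβ, zero_dotProduct]
  have hsplit : y - X *ᵥ β' = (y - X *ᵥ β) + X *ᵥ (β - β') := by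
    rw [mulVec_sub]
    abel
  simp only [hsplit, vnorm_eq_norm_toLp, WithLp.toLp_add, pow_two]
  exact norm_add_sq_eq_norm_sq_add_norm_sq_of_inner_eq_zero _ _ horth

theorem vnorm_sub_sq_le (hσ : 0 < sigmaMin X)
    (h : vnorm (X *ᵥ (β - β')) ^ 2 ≤ ε * vnorm (y - X *ᵥ β) ^ 2) :
    vnorm (β - β') ^ 2 ≤ ε / sigmaMin X ^ 2 * vnorm (y - X *ᵥ β) ^ 2 := by
  rw [div_mul_eq_mul_div, le_div_iff₀ (by positivity), mul_comm, ← mul_pow]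
  refine le_trans (pow_le_pow_left₀ ?_ (sigmaMin_mul_vnorm_le X _) 2) h
  exact mul_nonneg hσ.le (vnorm_nonneg _)

theorem vnorm_sub_mulVec_sq_le {γ : ℝ} (hβ : Xᵀ *ᵥ (y - X *ᵥ β) = 0) (hγ : 0 < γ) (hγ_le : γ ≤ 1)
    (hy : γ * vnorm y ≤ vnorm (X *ᵥ β)) :
    vnorm (y - X *ᵥ β) ^ 2 ≤ (γ⁻¹ ^ 2 - 1) * (sigmaMax X * vnorm β) ^ 2 := by
  have hpythagoras : vnorm y ^ 2 = vnorm (y - X *ᵥ β) ^ 2 + vnorm (X *ᵥ β) ^ 2 := by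
    simpa using vnorm_sub_mulVec_sq_eq_add hβ 0
  have hy' : vnorm y ^ 2 ≤ γ⁻¹ ^ 2 * vnorm (X *ᵥ β) ^ 2 := by
    rw [← mul_pow]
    exact pow_le_pow_left₀ (vnorm_nonneg y) ((le_inv_mul_iff₀ hγ).2 hy) 2
  calc vnorm (y - X *ᵥ β) ^ 2 ≤ (γ⁻¹ ^ 2 - 1) * vnorm (X *ᵥ β) ^ 2 := by linarith
    _ ≤ (γ⁻¹ ^ 2 - 1) * (sigmaMax X * vnorm β) ^ 2 :=
      mul_le_mul_of_nonneg_left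
        (pow_le_pow_left₀ (vnorm_nonneg _) (vnorm_mulVec_le_sigmaMax_mul X β) 2)
        (sub_nonneg.2 (one_le_pow₀ ((one_le_inv₀ hγ).2 hγ_le)))

theorem vnorm_sub_sq_le_of_mul_vnorm_le {γ : ℝ} (hσ : 0 < sigmaMin X) (hε : 0 ≤ ε)
    (hβ : Xᵀ *ᵥ (y - X *ᵥ β) = 0)
    (h : vnorm (X *ᵥ (β - β')) ^ 2 ≤ ε * vnorm (y - X *ᵥ β) ^ 2) (hγ : 0 < γ) (hγ_le : γ ≤ 1)
    (hy : γ * vnorm y ≤ vnorm (X *ᵥ β)) :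
    vnorm (β - β') ^ 2
      ≤ ε * (sigmaMax X / sigmaMin X) ^ 2 * (γ⁻¹ ^ 2 - 1) * vnorm β ^ 2 := by
  grw [vnorm_sub_sq_le hσ h, vnorm_sub_mulVec_sq_le hβ hγ hγ_le hy]
  exact le_of_eq (by ring)

-- Apply the bound for good samples to `z = Uᵀ X (β' - β)`, for which `U z = X (β' - β)`.
theorem vnorm_mulVec_sub_sq_le_of_isGoodSample {U : Matrix (Fin n) (Fin d) ℝ} {δ : ℝ}
    {s : Finset (Fin n)} (hU : Uᵀ * U = 1) (hUX : U * Uᵀ * X = X)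
    (hs : IsGoodSample δ ε (euclideanRow U) (y - X *ᵥ β) Finset.univ s)
    (hβ' : ∑ i ∈ s, (y i - (X *ᵥ β') i) ^ 2 ≤ ∑ i ∈ s, (y i - (X *ᵥ β) i) ^ 2) :
    vnorm (X *ᵥ (β - β')) ^ 2 ≤ ε * vnorm (y - X *ᵥ β) ^ 2 := by
  set z : EuclideanSpace ℝ (Fin d) := WithLp.toLp 2 (Uᵀ *ᵥ X *ᵥ (β' - β)) with hz
  have hinner : ∀ i, inner ℝ (euclideanRow U i) z = (X *ᵥ (β' - β)) i := fun i ↦ by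
    rw [inner_euclideanRow, hz, mulVec_mulVec, mulVec_mulVec, hUX]
  have hnorm : vnorm (X *ᵥ (β - β')) ^ 2 = ‖z‖ ^ 2 := by
    rw [← neg_sub, mulVec_neg, ← neg_one_smul ℝ, vnorm_smul, abs_neg, abs_one, one_mul,
      ← sum_inner_euclideanRow_sq hU, vnorm_sq_eq_sum]
    simp only [hinner]
  rw [hnorm, vnorm_sq_eq_sum]
  refine hs.norm_sq_le ?_
  simpa only [hinner, mulVec_sub, Pi.sub_apply, sub_sub_sub_cancel_right] using hβ'

end LeastSquares

/-- Error bound for uniform-sampling based least-squares regression: if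
`1000 μ d (ln d + 7) ≤ c ≤ n`, then with probability at least `0.05` over a uniform
random `c`-subset `C` of the rows, every minimizer `β̃` of `β ↦ Σ_{i∈C}(y_i − x^(i)β)²`
satisfies `‖y − Xβ̃‖² ≤ 2.2‖y − Xβ_lsr‖²` and
`‖β_lsr − β̃‖² ≤ (1.2/σ_min²(X))‖y − Xβ_lsr‖²`, and moreover, if `γ ∈ (0,1]` satisfies
`‖UUᵀy‖ ≥ γ‖y‖`, also `‖β_lsr − β̃‖² ≤ 1.2 κ²(X)(γ⁻² − 1)‖β_lsr‖²`. -/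
theorem stmt_12 {n d : ℕ} (hd : 2 ≤ d) (hdn : d ≤ n)
    (X : Matrix (Fin n) (Fin d) ℝ) (hrank : X.rank = d)
    (y : Fin n → ℝ)
    (U : Matrix (Fin n) (Fin d) ℝ) (hU : Uᵀ * U = 1)
    (hcol : LinearMap.range U.mulVecLin = LinearMap.range X.mulVecLin)
    (βlsr : Fin d → ℝ) (hβ : βlsr = ((Xᵀ * X)⁻¹ * Xᵀ).mulVec y)
    (μ : ℝ) (hμ : μ = ((n : ℝ) / d) * ⨆ i : Fin n, (X * (Xᵀ * X)⁻¹ * Xᵀ) i i)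
    (c : ℕ) (hc : 1000 * μ * d * (Real.log d + 7) ≤ c) (hcn : c ≤ n)
    (obj : Finset (Fin n) → (Fin d → ℝ) → ℝ)
    (hobj : obj = fun s β => ∑ i ∈ s, (y i - ∑ j, X i j * β j) ^ 2) :
    (0.05 : ℝ) ≤
      (((Finset.univ : Finset (Fin n)).powersetCard c).filter
            (fun s => ∀ βt : Fin d → ℝ, (∀ β, obj s βt ≤ obj s β) →
              vnorm (y - X.mulVec βt) ^ 2 ≤ 2.2 * vnorm (y - X.mulVec βlsr) ^ 2 ∧
              vnorm (βlsr - βt) ^ 2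
                ≤ 1.2 / sigmaMin X ^ 2 * vnorm (y - X.mulVec βlsr) ^ 2 ∧
              ∀ γ : ℝ, 0 < γ → γ ≤ 1 → γ * vnorm y ≤ vnorm ((U * Uᵀ).mulVec y) →
                vnorm (βlsr - βt) ^ 2
                  ≤ 1.2 * (sigmaMax X / sigmaMin X) ^ 2 * (γ⁻¹ ^ 2 - 1)
                      * vnorm βlsr ^ 2)).card
        / (n.choose c : ℝ) := by
  have : NeZero d := ⟨by omega⟩
  have hX : IsUnit (Xᵀ * X).det := isUnit_det_transpose_mul_self_of_rank_eq_card (by simpa)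
  have hproj : U * Uᵀ = X * (Xᵀ * X)⁻¹ * Xᵀ := mul_transpose_eq_of_range_eq hX hU hcol
  have hfit : (U * Uᵀ) *ᵥ y = X *ᵥ βlsr := by rw [hβ, mulVec_mulVec, hproj, Matrix.mul_assoc]
  have hnormal : Xᵀ *ᵥ (y - X *ᵥ βlsr) = 0 := hβ ▸ transpose_mulVec_sub_mulVec_eq_zero hX y
  have hUr : Uᵀ *ᵥ (y - X *ᵥ βlsr) = 0 := by
    rw [← hfit, mulVec_sub, mulVec_mulVec, ← Matrix.mul_assoc, hU, Matrix.one_mul, sub_self]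
  have hL : ∀ i, (U * Uᵀ) i i ≤ ⨆ i, (X * (Xᵀ * X)⁻¹ * Xᵀ) i i := fun i ↦
    hproj ▸ le_ciSup (Set.finite_range fun i ↦ (U * Uᵀ) i i).bddAbove i
  have hμd : μ * d = n * ⨆ i, (X * (Xᵀ * X)⁻¹ * Xᵀ) i i := by rw [hμ]; field_simp
  have hgood := half_mul_choose_le_card_filter_isGoodSample_euclideanRow hU hL hUr (c := c)
    (by rw [Fintype.card_fin, Fintype.card_fin, ← hμd, ← mul_assoc]; exact hc) (by simpa)
  rw [Fintype.card_fin] at hgood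
  rw [le_div_iff₀ (by exact_mod_cast Nat.choose_pos hcn)]
  grw [show (0.05 : ℝ) ≤ 1 / 2 by norm_num, hgood]
  gcongr with s
  intro hs βt hβt
  have hpred := vnorm_mulVec_sub_sq_le_of_isGoodSample hU
    (by rw [hproj, mul_nonsing_inv_transpose_mul_self_mul hX]) hs
    (by simpa only [hobj, mulVec, dotProduct] using hβt βlsr)
  refine ⟨?_, vnorm_sub_sq_le (sigmaMin_pos hX) hpred, fun γ hγ hγ_le hy ↦
    vnorm_sub_sq_le_of_mul_vnorm_le (sigmaMin_pos hX) (by norm_num) hnormal hpred hγ hγ_le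
      (hfit ▸ hy)⟩
  rw [vnorm_sub_mulVec_sq_eq_add hnormal]
  linarith
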